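/- Let G be a finite-dimensional Lie algebra over a field k and let O : G* → G be a skewsymmetric linear map. Then the trilinear identity ⟨u, [O(v), O(w)]⟩ + ⟨v, [O(w), O(u)]⟩ + ⟨w, [O(u), O(v)]⟩ = 0 holds for all u, v, w ∈ G* if and only if the bilinear identity O(O(u)·v − O(v)·u) = [O(u), O(v)] holds for all u, v ∈ G*. -/

import Mathlib

/-- The coadjoint action of `X ∈ G` on `u ∈ G*`: `⟨X·u, Y⟩ = −⟨u, [X, Y]⟩`. -/
noncomputable def coad {k : Type*} [Field k] {L : Type*} [LieRing L] [LieAlgebra k L]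
    (X : L) (u : Module.Dual k L) : Module.Dual k L :=
  - (u ∘ₗ (LieAlgebra.ad k L X))

section

open Module (Dual)

variable {R L : Type*} [CommRing R] [LieRing L] [LieAlgebra R L]

theorem dual_lie_sub_lie_apply (X Y Z : L) (u v : Dual R L) :
    (⁅X, v⁆ - ⁅Y, u⁆) Z = u ⁅Y, Z⁆ + v ⁅Z, X⁆ := by
  rw [LinearMap.sub_apply, Module.Dual.lie_apply, Module.Dual.lie_apply, ← map_neg v, lie_skew,
    sub_neg_eq_add, add_comm]

/-- The first two terms pair `⁅O u, v⁆ - ⁅O v, u⁆` with `O w`; skewsymmetry moves `O` to the other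
side of this pairing. -/
theorem cyclic_sum_eq_dual_apply_sub {O : Dual R L →ₗ[R] L}
    (hskew : ∀ u v : Dual R L, u (O v) + v (O u) = 0) (u v w : Dual R L) :
    u ⁅O v, O w⁆ + v ⁅O w, O u⁆ + w ⁅O u, O v⁆ =
      w (⁅O u, O v⁆ - O (⁅O u, v⁆ - ⁅O v, u⁆)) :=
  calc
    u ⁅O v, O w⁆ + v ⁅O w, O u⁆ + w ⁅O u, O v⁆
    _ = (⁅O u, v⁆ - ⁅O v, u⁆) (O w) + w ⁅O u, O v⁆ := by rw [dual_lie_sub_lie_apply]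
    _ = -w (O (⁅O u, v⁆ - ⁅O v, u⁆)) + w ⁅O u, O v⁆ := by
      rw [eq_neg_of_add_eq_zero_left (hskew _ w)]
    _ = w (⁅O u, O v⁆ - O (⁅O u, v⁆ - ⁅O v, u⁆)) := by rw [map_sub w, neg_add_eq_sub]

theorem forall_cyclic_sum_eq_zero_iff (hL : Function.Injective (Dual.eval R L))
    {O : Dual R L →ₗ[R] L} (hskew : ∀ u v : Dual R L, u (O v) + v (O u) = 0) (u v : Dual R L) :
    (∀ w : Dual R L, u ⁅O v, O w⁆ + v ⁅O w, O u⁆ + w ⁅O u, O v⁆ = 0) ↔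
      O (⁅O u, v⁆ - ⁅O v, u⁆) = ⁅O u, O v⁆ := by
  have forall_dual_eq_zero_iff (X : L) : (∀ w : Dual R L, w X = 0) ↔ X = 0 :=
    LinearMap.ext_iff.symm.trans (map_eq_zero_iff (Dual.eval R L) hL)
  simp only [cyclic_sum_eq_dual_apply_sub hskew]
  rw [forall_dual_eq_zero_iff, sub_eq_zero, eq_comm]

theorem trilinear_iff_bilinear_O_equation_general (hL : Function.Injective (Dual.eval R L))
    {O : Dual R L →ₗ[R] L} (hskew : ∀ u v : Dual R L, u (O v) + v (O u) = 0) :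
    (∀ u v w : Dual R L, u ⁅O v, O w⁆ + v ⁅O w, O u⁆ + w ⁅O u, O v⁆ = 0) ↔
      ∀ u v : Dual R L, O (⁅O u, v⁆ - ⁅O v, u⁆) = ⁅O u, O v⁆ :=
  forall₂_congr (forall_cyclic_sum_eq_zero_iff hL hskew)

end

theorem coad_eq_lie {k L : Type*} [Field k] [LieRing L] [LieAlgebra k L]
    (X : L) (u : Module.Dual k L) : coad X u = ⁅X, u⁆ :=
  rfl

/-- For a skewsymmetric linear map `O : G* → G`, the trilinear identity
`⟨u, [O v, O w]⟩ + c.p. = 0` holds iff the bilinear identity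
`O(O(u)·v − O(v)·u) = [O(u), O(v)]` holds. -/
theorem trilinear_iff_bilinear_O_equation (k : Type*) [Field k]
    (L : Type*) [LieRing L] [LieAlgebra k L] [FiniteDimensional k L]
    (O : Module.Dual k L →ₗ[k] L)
    (hskew : ∀ u v : Module.Dual k L, u (O v) + v (O u) = 0) :
    (∀ u v w : Module.Dual k L,
        u ⁅O v, O w⁆ + v ⁅O w, O u⁆ + w ⁅O u, O v⁆ = 0) ↔
      (∀ u v : Module.Dual k L,
        O (coad (O u) v - coad (O v) u) = ⁅O u, O v⁆) := by
  simp only [coad_eq_lie]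
  exact trilinear_iff_bilinear_O_equation_general (Module.eval_apply_injective k) hskew
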